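/- Let C be a copula with attained asymmetry m. Then g(m) ≤ β(C) ≤ h(m), where β(C) = 4·C(1/2,1/2) − 1 is Blomqvist's beta of C, g(m) = −1 if 0 ≤ m ≤ 1/4 and g(m) = 8m − 3 if 1/4 ≤ m ≤ 1/3, and h(m) = 1 if 0 ≤ m ≤ 1/6, h(m) = 3 − 12m if 1/6 ≤ m ≤ 1/4, and h(m) = 1 − 4m if 1/4 ≤ m ≤ 1/3. In particular, if m = 1/3 then β(C) = −1/3. -/

import Mathlib

open Set MeasureTheory intervalIntegral

/-- A bivariate copula: boundary conditions plus the 2-increasing property. -/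
def IsCopula (C : ℝ → ℝ → ℝ) : Prop :=
  (∀ u ∈ Set.Icc (0:ℝ) 1, C u 0 = 0 ∧ C 0 u = 0 ∧ C u 1 = u ∧ C 1 u = u) ∧
  ∀ u₁ u₂ v₁ v₂ : ℝ, 0 ≤ u₁ → u₁ ≤ u₂ → u₂ ≤ 1 → 0 ≤ v₁ → v₁ ≤ v₂ → v₂ ≤ 1 →
    0 ≤ C u₂ v₂ - C u₂ v₁ - C u₁ v₂ + C u₁ v₁

/-- The lower bound function C̲^{(a,b)}_c. -/
noncomputable def lowerC (a b c : ℝ) : ℝ → ℝ → ℝ := fun u v =>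
  max (max (u + v - 1) 0)
    (min (min (max (a + b - 1) 0 + c) (u - a + (max (a + b - 1) 0 + c)))
      (min (v - b + (max (a + b - 1) 0 + c)) (u + v - a - b + (max (a + b - 1) 0 + c))))

/-- The upper bound function C̄^{(a,b)}_c. -/
noncomputable def upperC (a b c : ℝ) : ℝ → ℝ → ℝ := fun u v =>
  min (min u v)
    (max (max (min a b - c) (u - b + (min a b - c)))
      (max (v - a + (min a b - c)) (u + v - a - b + (min a b - c))))

/-- Spearman's rho of a copula. -/
noncomputable def spearmanRho (C : ℝ → ℝ → ℝ) : ℝ :=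
  12 * (∫ u in (0:ℝ)..1, ∫ v in (0:ℝ)..1, C u v) - 3

/-- Spearman's footrule of a copula. -/
noncomputable def spearmanFootrule (C : ℝ → ℝ → ℝ) : ℝ :=
  6 * (∫ u in (0:ℝ)..1, C u u) - 2

/-- Gini's gamma of a copula. -/
noncomputable def giniGamma (C : ℝ → ℝ → ℝ) : ℝ :=
  4 * (∫ u in (0:ℝ)..1, (C u u + C u (1 - u))) - 2

/-- Blomqvist's beta of a copula. -/
noncomputable def blomqvistBeta (C : ℝ → ℝ → ℝ) : ℝ :=
  4 * C (1/2) (1/2) - 1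

/-!
A copula is a quasi-copula: it is monotone and 1-Lipschitz, properties that combine into
`Q u v ≤ Q s t + (u - s)⁺ + (v - t)⁺`. Applied in both directions between the centre `(1/2, 1/2)`
and the points `(a, b)`, `(b, a)`, this compares `β` with `Q a b` and `Q b a`, which the
Fréchet–Hoeffding bounds confine to `[max (a + b - 1) 0, min a b]`. What remains is to see how far
the asymmetry `|Q a b - Q b a|` forces `a` and `b` away from each other and from `0` and `1`.
-/

/-- A (bivariate) quasi-copula: boundary conditions, monotonicity and the 1-Lipschitz property for
the `ℓ¹` distance, all imposed on the unit square only. It is the class of functions for which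
asymmetry is compared with Blomqvist's beta. -/
structure IsQuasiCopula (Q : ℝ → ℝ → ℝ) : Prop where
  apply_zero_right : ∀ u ∈ Icc (0 : ℝ) 1, Q u 0 = 0
  apply_zero_left : ∀ v ∈ Icc (0 : ℝ) 1, Q 0 v = 0
  apply_one_right : ∀ u ∈ Icc (0 : ℝ) 1, Q u 1 = u
  apply_one_left : ∀ v ∈ Icc (0 : ℝ) 1, Q 1 v = v
  monotoneOn : MonotoneOn (Function.uncurry Q) (Icc 0 1 ×ˢ Icc 0 1)
  lipschitz : ∀ u ∈ Icc (0 : ℝ) 1, ∀ v ∈ Icc (0 : ℝ) 1, ∀ s ∈ Icc (0 : ℝ) 1,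
    ∀ t ∈ Icc (0 : ℝ) 1, |Q u v - Q s t| ≤ |u - s| + |v - t|

namespace IsCopula

variable {C : ℝ → ℝ → ℝ} {s t u v : ℝ}

theorem swap (hC : IsCopula C) : IsCopula fun u v => C v u := by
  refine ⟨fun u hu => ?_, fun u₁ u₂ v₁ v₂ hu₁ hu hu₂ hv₁ hv hv₂ => ?_⟩
  · obtain ⟨zero_right, zero_left, one_right, one_left⟩ := hC.1 u hu
    exact ⟨zero_left, zero_right, one_left, one_right⟩
  · linarith [hC.2 v₁ v₂ u₁ u₂ hv₁ hv hv₂ hu₁ hu hu₂]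

theorem monotoneOn_left (hC : IsCopula C) (hv : v ∈ Icc (0 : ℝ) 1) :
    MonotoneOn (C · v) (Icc 0 1) := by
  intro s hs u hu hsu
  have volume_nonneg := hC.2 s u 0 v hs.1 hsu hu.2 le_rfl hv.1 hv.2
  linarith [(hC.1 s hs).1, (hC.1 u hu).1]

theorem abs_sub_le_left (hC : IsCopula C) (hs : s ∈ Icc (0 : ℝ) 1) (hu : u ∈ Icc (0 : ℝ) 1)
    (hv : v ∈ Icc (0 : ℝ) 1) : |C u v - C s v| ≤ |u - s| := by
  wlog hsu : s ≤ u generalizing s u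
  · simpa only [abs_sub_comm] using this hu hs (le_of_not_ge hsu)
  have mono : C s v ≤ C u v := hC.monotoneOn_left hv hs hu hsu
  have volume_nonneg := hC.2 s u v 1 hs.1 hsu hu.2 hv.1 hv.2 le_rfl
  rw [abs_of_nonneg (sub_nonneg.2 mono), abs_of_nonneg (sub_nonneg.2 hsu)]
  linarith [(hC.1 s hs).2.2.1, (hC.1 u hu).2.2.1]

theorem isQuasiCopula (hC : IsCopula C) : IsQuasiCopula C where
  apply_zero_right u hu := (hC.1 u hu).1
  apply_zero_left v hv := (hC.1 v hv).2.1
  apply_one_right u hu := (hC.1 u hu).2.2.1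
  apply_one_left v hv := (hC.1 v hv).2.2.2
  monotoneOn := by
    rintro ⟨s, t⟩ ⟨hs, ht⟩ ⟨u, v⟩ ⟨hu, hv⟩ ⟨hsu, htv⟩
    calc C s t ≤ C u t := hC.monotoneOn_left ht hs hu hsu
      _ ≤ C u v := hC.swap.monotoneOn_left hu ht hv htv
  lipschitz u hu v hv s hs t ht :=
    calc |C u v - C s t| ≤ |C u v - C s v| + |C s v - C s t| := abs_sub_le ..
      _ ≤ |u - s| + |v - t| :=
        add_le_add (hC.abs_sub_le_left hs hu hv) (hC.swap.abs_sub_le_left ht hv hs)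

end IsCopula

namespace IsQuasiCopula

variable {Q : ℝ → ℝ → ℝ} {a b s t u v : ℝ}

theorem le_add_posPart (hQ : IsQuasiCopula Q) (hs : s ∈ Icc (0 : ℝ) 1) (ht : t ∈ Icc (0 : ℝ) 1)
    (hu : u ∈ Icc (0 : ℝ) 1) (hv : v ∈ Icc (0 : ℝ) 1) :
    Q u v ≤ Q s t + (u - s)⁺ + (v - t)⁺ := by
  have hus : u ⊔ s ∈ Icc (0 : ℝ) 1 := ⟨le_sup_of_le_left hu.1, sup_le hu.2 hs.2⟩
  have hvt : v ⊔ t ∈ Icc (0 : ℝ) 1 := ⟨le_sup_of_le_left hv.1, sup_le hv.2 ht.2⟩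
  have mono : Q u v ≤ Q (u ⊔ s) (v ⊔ t) :=
    hQ.monotoneOn (mk_mem_prod hu hv) (mk_mem_prod hus hvt) ⟨le_sup_left, le_sup_left⟩
  have increment_le := (le_abs_self _).trans (hQ.lipschitz _ hus _ hvt s hs t ht)
  have abs_sup_sub (x y : ℝ) : |x ⊔ y - y| = (x - y)⁺ := by
    rw [sup_eq_add_posPart_sub, add_sub_cancel_left, abs_of_nonneg (posPart_nonneg _)]
  rw [abs_sup_sub, abs_sup_sub] at increment_le
  linarith

theorem max_le_apply (hQ : IsQuasiCopula Q) (hu : u ∈ Icc (0 : ℝ) 1) (hv : v ∈ Icc (0 : ℝ) 1) :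
    max (u + v - 1) 0 ≤ Q u v := by
  have h0 : (0 : ℝ) ∈ Icc (0 : ℝ) 1 := left_mem_Icc.2 zero_le_one
  have h1 : (1 : ℝ) ∈ Icc (0 : ℝ) 1 := right_mem_Icc.2 zero_le_one
  refine max_le ?_ ?_
  · have := hQ.le_add_posPart hu hv hu h1
    rw [hQ.apply_one_right u hu, sub_self, posPart_zero,
      posPart_of_nonneg (sub_nonneg.2 hv.2)] at this
    linarith
  · calc 0 = Q 0 v := (hQ.apply_zero_left v hv).symm
      _ ≤ Q u v := hQ.monotoneOn (mk_mem_prod h0 hv) (mk_mem_prod hu hv) ⟨hu.1, le_rfl⟩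

theorem apply_le_min (hQ : IsQuasiCopula Q) (hu : u ∈ Icc (0 : ℝ) 1) (hv : v ∈ Icc (0 : ℝ) 1) :
    Q u v ≤ min u v := by
  have h1 : (1 : ℝ) ∈ Icc (0 : ℝ) 1 := right_mem_Icc.2 zero_le_one
  refine le_min ?_ ?_
  · calc Q u v ≤ Q u 1 := hQ.monotoneOn (mk_mem_prod hu hv) (mk_mem_prod hu h1) ⟨le_rfl, hv.2⟩
      _ = u := hQ.apply_one_right u hu
  · calc Q u v ≤ Q 1 v := hQ.monotoneOn (mk_mem_prod hu hv) (mk_mem_prod h1 hv) ⟨hu.2, le_rfl⟩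
      _ = v := hQ.apply_one_left v hv

theorem abs_sub_swap_le_abs_sub (hQ : IsQuasiCopula Q) (ha : a ∈ Icc (0 : ℝ) 1)
    (hb : b ∈ Icc (0 : ℝ) 1) : |Q a b - Q b a| ≤ |a - b| := by
  have posPart_add : (a - b)⁺ + (b - a)⁺ = |a - b| := by
    rw [← neg_sub a b, posPart_neg, posPart_add_negPart]
  rw [abs_sub_le_iff]
  constructor <;> linarith [hQ.le_add_posPart hb ha ha hb, hQ.le_add_posPart ha hb hb ha]

theorem abs_sub_swap_le_min_sub_max (hQ : IsQuasiCopula Q) (ha : a ∈ Icc (0 : ℝ) 1)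
    (hb : b ∈ Icc (0 : ℝ) 1) : |Q a b - Q b a| ≤ min a b - max (a + b - 1) 0 :=
  abs_sub_le_of_le_of_le (hQ.max_le_apply ha hb) (hQ.apply_le_min ha hb)
    (add_comm b a ▸ hQ.max_le_apply hb ha) (min_comm b a ▸ hQ.apply_le_min hb ha)

theorem max_add_abs_sub_swap_le_diag (hQ : IsQuasiCopula Q) (ha : a ∈ Icc (0 : ℝ) 1)
    (hb : b ∈ Icc (0 : ℝ) 1) (ht : t ∈ Icc (0 : ℝ) 1) :
    max (a + b - 1) 0 + |Q a b - Q b a| ≤ Q t t + (a - t)⁺ + (b - t)⁺ := by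
  have lower_ab := hQ.max_le_apply ha hb
  have lower_ba := hQ.max_le_apply hb ha
  rw [add_comm b a] at lower_ba
  rw [← le_sub_iff_add_le', abs_sub_le_iff]
  constructor <;> linarith [hQ.le_add_posPart ht ht ha hb, hQ.le_add_posPart ht ht hb ha]

theorem diag_add_abs_sub_swap_le_min (hQ : IsQuasiCopula Q) (ha : a ∈ Icc (0 : ℝ) 1)
    (hb : b ∈ Icc (0 : ℝ) 1) (ht : t ∈ Icc (0 : ℝ) 1) :
    Q t t + |Q a b - Q b a| ≤ min a b + (t - a)⁺ + (t - b)⁺ := by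
  have upper_ab := hQ.apply_le_min ha hb
  have upper_ba := hQ.apply_le_min hb ha
  rw [min_comm] at upper_ba
  rw [← le_sub_iff_add_le', abs_sub_le_iff]
  constructor <;> linarith [hQ.le_add_posPart ha hb ht ht, hQ.le_add_posPart hb ha ht ht]

theorem blomqvistBeta_mem_Icc (hQ : IsQuasiCopula Q) : blomqvistBeta Q ∈ Icc (-1 : ℝ) 1 := by
  have half_mem : (1 / 2 : ℝ) ∈ Icc (0 : ℝ) 1 := by norm_num
  have lower := (le_max_right _ _).trans (hQ.max_le_apply half_mem half_mem)
  have upper := (hQ.apply_le_min half_mem half_mem).trans (min_le_left _ _)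
  constructor <;> unfold blomqvistBeta <;> linarith

theorem eight_mul_sub_three_le_blomqvistBeta (hQ : IsQuasiCopula Q) (ha : a ∈ Icc (0 : ℝ) 1)
    (hb : b ∈ Icc (0 : ℝ) 1) : 8 * |Q a b - Q b a| - 3 ≤ blomqvistBeta Q := by
  wlog hab : a ≤ b generalizing a b
  · simpa only [abs_sub_comm] using this hb ha (le_of_not_ge hab)
  have center := hQ.max_add_abs_sub_swap_le_diag ha hb (t := 1 / 2) (by norm_num)
  have asymmetry_le := hQ.abs_sub_swap_le_min_sub_max ha hb
  rw [min_eq_left hab] at asymmetry_le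
  have lower_nonneg : 0 ≤ max (a + b - 1) 0 := le_max_right _ _
  have le_lower : a + b - 1 ≤ max (a + b - 1) 0 := le_max_left _ _
  unfold blomqvistBeta
  rcases le_total b (1 / 2) with hb_half | hb_half
  · rw [posPart_of_nonpos (by linarith), posPart_of_nonpos (by linarith)] at center
    linarith
  rcases le_total a (1 / 2) with ha_half | ha_half
  · rw [posPart_of_nonpos (by linarith), posPart_of_nonneg (by linarith)] at center
    linarith
  · rw [posPart_of_nonneg (by linarith), posPart_of_nonneg (by linarith)] at center
    linarith

theorem blomqvistBeta_le_max (hQ : IsQuasiCopula Q) (ha : a ∈ Icc (0 : ℝ) 1)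
    (hb : b ∈ Icc (0 : ℝ) 1) :
    blomqvistBeta Q ≤ max (3 - 12 * |Q a b - Q b a|) (1 - 4 * |Q a b - Q b a|) := by
  wlog hab : a ≤ b generalizing a b
  · simpa only [abs_sub_comm] using this hb ha (le_of_not_ge hab)
  have center := hQ.diag_add_abs_sub_swap_le_min ha hb (t := 1 / 2) (by norm_num)
  have asymmetry_le := hQ.abs_sub_swap_le_min_sub_max ha hb
  rw [min_eq_left hab] at center asymmetry_le
  have asymmetry_le_left : |Q a b - Q b a| ≤ a := by linarith [le_max_right (a + b - 1) 0]
  have asymmetry_le_one_sub : |Q a b - Q b a| ≤ 1 - b := by linarith [le_max_left (a + b - 1) 0]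
  have asymmetry_le_sub : |Q a b - Q b a| ≤ b - a := by
    simpa only [abs_of_nonpos (sub_nonpos.2 hab), neg_sub] using hQ.abs_sub_swap_le_abs_sub ha hb
  unfold blomqvistBeta
  rcases le_total b (1 / 2) with hb_half | hb_half
  · rw [posPart_of_nonneg (by linarith), posPart_of_nonneg (by linarith)] at center
    exact le_max_of_le_left (by linarith)
  rcases le_total a (1 / 2) with ha_half | ha_half
  · rw [posPart_of_nonneg (by linarith), posPart_of_nonpos (by linarith)] at center
    exact le_max_of_le_right (by linarith)
  · rw [posPart_of_nonpos (by linarith), posPart_of_nonpos (by linarith)] at center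
    exact le_max_of_le_left (by linarith)

end IsQuasiCopula

-- The lines `3 - 12 * m` and `1 - 4 * m` cross at `m = 1 / 4`, and the first reaches `1` at
-- `m = 1 / 6`, so the bounds below are the piecewise functions `g` and `h`.
theorem beta_vs_asymmetry_general {Q : ℝ → ℝ → ℝ} {a b : ℝ} (hQ : IsQuasiCopula Q)
    (ha : a ∈ Icc (0 : ℝ) 1) (hb : b ∈ Icc (0 : ℝ) 1) :
    max (-1) (8 * |Q a b - Q b a| - 3) ≤ blomqvistBeta Q ∧
      blomqvistBeta Q ≤ min 1 (max (3 - 12 * |Q a b - Q b a|) (1 - 4 * |Q a b - Q b a|)) :=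
  ⟨max_le hQ.blomqvistBeta_mem_Icc.1 (hQ.eight_mul_sub_three_le_blomqvistBeta ha hb),
    le_min hQ.blomqvistBeta_mem_Icc.2 (hQ.blomqvistBeta_le_max ha hb)⟩

theorem beta_vs_asymmetry (C : ℝ → ℝ → ℝ) (m : ℝ) (hC : IsCopula C)
    (hbound : ∀ u ∈ Set.Icc (0:ℝ) 1, ∀ v ∈ Set.Icc (0:ℝ) 1, |C u v - C v u| ≤ m)
    (hattain : ∃ a ∈ Set.Icc (0:ℝ) 1, ∃ b ∈ Set.Icc (0:ℝ) 1, |C a b - C b a| = m) :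
    ((0 ≤ m → m ≤ 1/4 → -1 ≤ blomqvistBeta C) ∧
     (1/4 ≤ m → m ≤ 1/3 → 8 * m - 3 ≤ blomqvistBeta C)) ∧
    ((0 ≤ m → m ≤ 1/6 → blomqvistBeta C ≤ 1) ∧
     (1/6 ≤ m → m ≤ 1/4 → blomqvistBeta C ≤ 3 - 12 * m) ∧
     (1/4 ≤ m → m ≤ 1/3 → blomqvistBeta C ≤ 1 - 4 * m)) ∧
    (m = 1/3 → blomqvistBeta C = -(1/3)) := by
  obtain ⟨a, ha, b, hb, rfl⟩ := hattain
  grind [beta_vs_asymmetry_general hC.isQuasiCopula ha hb]
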